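/- arXiv:math/0005042 — 3 statements merged into one kernel-verified Lean document; each statement's English description precedes it below -/
import Mathlib

section
/- Given a datum (α, ρ) satisfying (5.3) and (5.4) and a 𝕜-linear map b : g → h, define α'_X = α_X + ad_{b(X)} and ρ'(X,Y) = ρ(X,Y) + α_X(b(Y)) − α_Y(b(X)) − b(⁅X,Y⁆) + ⁅b(X), b(Y)⁆. Then (α', ρ') also satisfies (5.3) and (5.4), and the map ψ : e(α,ρ) → e(α',ρ'), ψ(H, X) = (H − b(X), X), is an isomorphism of Lie algebras with ψ(H,0) = (H,0) and pr₂ ∘ ψ = pr₂. -/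
/-- The bracket (5.5) on `e(α,ρ) = h × g` for (possibly unbundled) maps `α`, `ρ`:
`⁅(H₁,X₁),(H₂,X₂)⁆ = (⁅H₁,H₂⁆ + α X₁ H₂ - α X₂ H₁ + ρ X₁ X₂, ⁅X₁,X₂⁆)`. -/
def extBracketF {𝕜 : Type*} [Field 𝕜] {h g : Type*} [LieRing h] [LieAlgebra 𝕜 h]
    [LieRing g] [LieAlgebra 𝕜 g] (α : g → LieDerivation 𝕜 h h)
    (ρ : g → g → h) (p q : h × g) : h × g :=
  (⁅p.1, q.1⁆ + α p.2 q.1 - α q.2 p.1 + ρ p.2 q.2, ⁅p.2, q.2⁆)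

/-!
Think of `α` as a connection with values in `Der h`. Passing from `(α, ρ)` to `(α', ρ')` replaces
the linear section `X ↦ (0, X)` of `e(α, ρ) → g` by `X ↦ (b X, X)`, and `ψ` is the corresponding
change of coordinates. Write `F` for the curvature of `α`, `d` for its covariant derivative and
`½[b, b]` for `(X, Y) ↦ ⁅b X, b Y⁆`. Then `ρ' = ρ + d b + ½[b, b]`, and the two conditions read
`F = ad ρ` and `d ρ = 0`. Since `F' = F + ad (d b + ½[b, b])`, the difference `F - ad ρ` is
unchanged. Moreover `d (d b) = F b`, `d (½[b, b])` cancels `[b, d b]`, and `[b, [b, b]] = 0`, so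
that `d' ρ' = d ρ + (F - ad ρ) b`.
-/

section Connection

variable {R h g : Type*} [CommRing R] [LieRing h] [LieAlgebra R h] [LieRing g]

/-- The curvature of a `Der h`-valued connection `α` on `g`, i.e. the failure of `α` to preserve
brackets; condition (5.3) says that it equals `ad ρ`. -/
def curvature (α : g → LieDerivation R h h) (X Y : g) : LieDerivation R h h :=
  ⁅α X, α Y⁆ - α ⁅X, Y⁆

/-- The covariant derivative of an `h`-valued 1-cochain: the Chevalley–Eilenberg formula with the
connection `α` in place of an action. -/
def covDeriv₁ (α : g → LieDerivation R h h) (b : g → h) (X Y : g) : h :=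
  α X (b Y) - α Y (b X) - b ⁅X, Y⁆

/-- The covariant derivative of an `h`-valued 2-cochain, written as the cyclic sum on the left of
(5.4). It agrees with the Chevalley–Eilenberg formula for alternating bilinear `ω`. -/
def covDeriv₂ (α : g → LieDerivation R h h) (ω : g → g → h) (X Y Z : g) : h :=
  α X (ω Y Z) + α Y (ω Z X) + α Z (ω X Y) - ω ⁅X, Y⁆ Z - ω ⁅Y, Z⁆ X - ω ⁅Z, X⁆ Y

/-- The connection `α'` obtained from `α` by the change of section `b`. -/
def gaugeConnection (α : g → LieDerivation R h h) (b : g → h) (X : g) : LieDerivation R h h :=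
  α X + LieDerivation.ad R h (b X)

/-- The 2-cochain `ρ'` obtained from `ρ` by the change of section `b`. -/
def gaugeCochain (α : g → LieDerivation R h h) (ρ : g → g → h) (b : g → h) (X Y : g) : h :=
  ρ X Y + α X (b Y) - α Y (b X) - b ⁅X, Y⁆ + ⁅b X, b Y⁆

/-- The bracket (5.5) on `h × g`, over an arbitrary commutative ring. -/
def extBracket (α : g → LieDerivation R h h) (ρ : g → g → h) (p q : h × g) : h × g :=
  (⁅p.1, q.1⁆ + α p.2 q.1 - α q.2 p.1 + ρ p.2 q.2, ⁅p.2, q.2⁆)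

theorem lie_add_ad_add_ad (D E : LieDerivation R h h) (H K : h) :
    ⁅D + LieDerivation.ad R h H, E + LieDerivation.ad R h K⁆ =
      ⁅D, E⁆ + LieDerivation.ad R h (D K - E H + ⁅H, K⁆) := by
  rw [add_lie, lie_add, lie_add, ← LieHom.map_lie, ← lie_skew (LieDerivation.ad R h H) E,
    LieDerivation.lie_der_ad_eq_ad_der, LieDerivation.lie_der_ad_eq_ad_der, map_add, map_sub]
  abel

variable (α : g → LieDerivation R h h)

theorem gaugeCochain_eq_add (ρ : g → g → h) (b : g → h) :
    gaugeCochain α ρ b = ρ + covDeriv₁ α b + fun X Y => ⁅b X, b Y⁆ := by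
  funext X Y
  simp only [gaugeCochain, covDeriv₁, Pi.add_apply]
  abel

theorem curvature_gaugeConnection (b : g → h) (X Y : g) :
    curvature (gaugeConnection α b) X Y =
      curvature α X Y + LieDerivation.ad R h (covDeriv₁ α b X Y + ⁅b X, b Y⁆) := by
  simp only [curvature, gaugeConnection, covDeriv₁, lie_add_ad_add_ad, map_add, map_sub]
  abel

theorem curvature_gaugeConnection_sub_ad (ρ : g → g → h) (b : g → h) (X Y : g) :
    curvature (gaugeConnection α b) X Y - LieDerivation.ad R h (gaugeCochain α ρ b X Y) =
      curvature α X Y - LieDerivation.ad R h (ρ X Y) := by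
  simp only [curvature_gaugeConnection, gaugeCochain_eq_add, Pi.add_apply, map_add]
  abel

theorem covDeriv₂_add (ω η : g → g → h) (X Y Z : g) :
    covDeriv₂ α (ω + η) X Y Z = covDeriv₂ α ω X Y Z + covDeriv₂ α η X Y Z := by
  simp only [covDeriv₂, Pi.add_apply, map_add]
  abel

theorem covDeriv₂_gaugeConnection (b : g → h) (ω : g → g → h) (X Y Z : g) :
    covDeriv₂ (gaugeConnection α b) ω X Y Z =
      covDeriv₂ α ω X Y Z + (⁅b X, ω Y Z⁆ + ⁅b Y, ω Z X⁆ + ⁅b Z, ω X Y⁆) := by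
  simp only [covDeriv₂, gaugeConnection, LieDerivation.add_apply, LieDerivation.ad_apply_apply]
  abel

theorem covDeriv₂_covDeriv₁ (b : g →+ h) (X Y Z : g) :
    covDeriv₂ α (covDeriv₁ α b) X Y Z =
      curvature α Y Z (b X) + curvature α Z X (b Y) + curvature α X Y (b Z) := by
  have jacobi : b ⁅⁅X, Y⁆, Z⁆ + b ⁅⁅Y, Z⁆, X⁆ + b ⁅⁅Z, X⁆, Y⁆ = 0 := by
    rw [← map_add, ← map_add, ← lie_skew ⁅X, Y⁆, ← lie_skew ⁅Y, Z⁆, ← lie_skew ⁅Z, X⁆,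
      ← neg_add, ← neg_add, add_assoc, add_comm, lie_jacobi, neg_zero, map_zero]
  simp only [covDeriv₂, covDeriv₁, curvature, LieDerivation.sub_apply,
    LieDerivation.commutator_apply, map_sub]
  linear_combination (norm := abel) jacobi

theorem covDeriv₂_lie (b : g → h) (X Y Z : g) :
    covDeriv₂ α (fun X Y => ⁅b X, b Y⁆) X Y Z =
      -(⁅b X, covDeriv₁ α b Y Z⁆ + ⁅b Y, covDeriv₁ α b Z X⁆ + ⁅b Z, covDeriv₁ α b X Y⁆) := by
  simp only [covDeriv₂, covDeriv₁, LieDerivation.apply_lie_eq_sub, lie_sub]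
  rw [← lie_skew (b ⁅X, Y⁆), ← lie_skew (b ⁅Y, Z⁆), ← lie_skew (b ⁅Z, X⁆)]
  abel

theorem covDeriv₂_gaugeConnection_gaugeCochain (ρ : g → g → h) (b : g →+ h) (X Y Z : g) :
    covDeriv₂ (gaugeConnection α b) (gaugeCochain α ρ b) X Y Z =
      covDeriv₂ α ρ X Y Z +
        ((curvature α Y Z - LieDerivation.ad R h (ρ Y Z)) (b X) +
          (curvature α Z X - LieDerivation.ad R h (ρ Z X)) (b Y) +
          (curvature α X Y - LieDerivation.ad R h (ρ X Y)) (b Z)) := by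
  rw [covDeriv₂_gaugeConnection, gaugeCochain_eq_add, covDeriv₂_add, covDeriv₂_add,
    covDeriv₂_covDeriv₁, covDeriv₂_lie]
  simp only [Pi.add_apply, lie_add, LieDerivation.sub_apply, LieDerivation.ad_apply_apply]
  rw [← lie_skew (ρ Y Z), ← lie_skew (ρ Z X), ← lie_skew (ρ X Y)]
  linear_combination (norm := abel) lie_jacobi (b X) (b Y) (b Z)

end Connection

section Shear

variable {R M N : Type*} [Ring R] [AddCommGroup M] [AddCommGroup N] [Module R M] [Module R N]

/-- The shear `(m, n) ↦ (m - b n, n)` of `M × N`. For `b : g → h` this is the map `ψ`. -/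
def shearEquiv (b : N →ₗ[R] M) : (M × N) ≃ₗ[R] (M × N) :=
  LinearEquiv.prodComm R M N ≪≫ₗ
    (LinearEquiv.refl R N).skewProd (LinearEquiv.refl R M) (-b) ≪≫ₗ LinearEquiv.prodComm R N M

theorem shearEquiv_apply (b : N →ₗ[R] M) (p : M × N) : shearEquiv b p = (p.1 - b p.2, p.2) := by
  simp [shearEquiv, sub_eq_add_neg]

end Shear

section Extension

variable {R h g : Type*} [CommRing R] [LieRing h] [LieAlgebra R h] [LieRing g]

theorem shearEquiv_extBracket [Module R g] (α : g → LieDerivation R h h) (ρ : g → g → h)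
    (b : g →ₗ[R] h) (p q : h × g) :
    shearEquiv b (extBracket α ρ p q) =
      extBracket (gaugeConnection α b) (gaugeCochain α ρ b) (shearEquiv b p) (shearEquiv b q) := by
  simp only [shearEquiv_apply, extBracket, gaugeConnection, gaugeCochain, LieDerivation.add_apply,
    LieDerivation.ad_apply_apply, map_sub, lie_sub, sub_lie, Prod.mk.injEq, and_true]
  rw [← lie_skew (b q.2) p.1, ← lie_skew (b q.2) (b p.2)]
  abel

theorem statement6_general [LieAlgebra R g] (α : g → LieDerivation R h h) (ρ : g → g → h)
    (h53 : ∀ X Y : g, curvature α X Y = LieDerivation.ad R h (ρ X Y))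
    (h54 : ∀ X Y Z : g, covDeriv₂ α ρ X Y Z = 0) (b : g →ₗ[R] h) :
    (∀ X Y : g,
      curvature (gaugeConnection α b) X Y = LieDerivation.ad R h (gaugeCochain α ρ b X Y)) ∧
    (∀ X Y Z : g, covDeriv₂ (gaugeConnection α b) (gaugeCochain α ρ b) X Y Z = 0) ∧
    (∃ ψ : (h × g) ≃ₗ[R] (h × g),
      (∀ (H : h) (X : g), ψ (H, X) = (H - b X, X)) ∧
      (∀ p q : h × g,
        ψ (extBracket α ρ p q) =
          extBracket (gaugeConnection α b) (gaugeCochain α ρ b) (ψ p) (ψ q)) ∧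
      (∀ H : h, ψ (H, 0) = (H, 0)) ∧
      (∀ p : h × g, (ψ p).2 = p.2)) := by
  have curvature_sub_ad (X Y : g) : curvature α X Y - LieDerivation.ad R h (ρ X Y) = 0 :=
    sub_eq_zero.mpr (h53 X Y)
  refine ⟨fun X Y => ?_, fun X Y Z => ?_, shearEquiv b, fun H X => shearEquiv_apply b (H, X),
    shearEquiv_extBracket α ρ b, fun H => ?_, fun p => ?_⟩
  · rw [← sub_eq_zero, curvature_gaugeConnection_sub_ad, curvature_sub_ad]
  · refine (covDeriv₂_gaugeConnection_gaugeCochain α ρ (b : g →+ h) X Y Z).trans ?_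
    simp only [h54, curvature_sub_ad, LieDerivation.zero_apply, add_zero]
  · simp only [shearEquiv_apply, map_zero, sub_zero]
  · rw [shearEquiv_apply]

end Extension

/-- Given a datum `(α, ρ)` satisfying (5.3) and (5.4) and a `𝕜`-linear
map `b : g → h`, define `α'_X = α_X + ad_(b X)` and
`ρ' X Y = ρ X Y + α X (b Y) - α Y (b X) - b ⁅X,Y⁆ + ⁅b X, b Y⁆`.
Then `(α', ρ')` also satisfies (5.3) and (5.4), and the map
`ψ : e(α,ρ) → e(α',ρ')`, `ψ (H, X) = (H - b X, X)`, is an isomorphism of Lie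
algebras with `ψ (H, 0) = (H, 0)` and `pr₂ ∘ ψ = pr₂`. -/
theorem statement6 {𝕜 : Type*} [Field 𝕜] {h g : Type*} [LieRing h] [LieAlgebra 𝕜 h]
    [LieRing g] [LieAlgebra 𝕜 g] (α : g →ₗ[𝕜] LieDerivation 𝕜 h h)
    (ρ : g →ₗ[𝕜] g →ₗ[𝕜] h) (halt : ∀ X : g, ρ X X = 0)
    (h53 : ∀ X Y : g, ⁅α X, α Y⁆ - α ⁅X, Y⁆ = LieDerivation.ad 𝕜 h (ρ X Y))
    (h54 : ∀ X Y Z : g,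
      α X (ρ Y Z) + α Y (ρ Z X) + α Z (ρ X Y)
        - ρ ⁅X, Y⁆ Z - ρ ⁅Y, Z⁆ X - ρ ⁅Z, X⁆ Y = 0)
    (b : g →ₗ[𝕜] h) :
    let α' : g → LieDerivation 𝕜 h h := fun X => α X + LieDerivation.ad 𝕜 h (b X)
    let ρ' : g → g → h := fun X Y =>
      ρ X Y + α X (b Y) - α Y (b X) - b ⁅X, Y⁆ + ⁅b X, b Y⁆
    (∀ X Y : g, ⁅α' X, α' Y⁆ - α' ⁅X, Y⁆ = LieDerivation.ad 𝕜 h (ρ' X Y)) ∧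
    (∀ X Y Z : g,
      α' X (ρ' Y Z) + α' Y (ρ' Z X) + α' Z (ρ' X Y)
        - ρ' ⁅X, Y⁆ Z - ρ' ⁅Y, Z⁆ X - ρ' ⁅Z, X⁆ Y = 0) ∧
    (∃ ψ : (h × g) ≃ₗ[𝕜] (h × g),
      (∀ (H : h) (X : g), ψ (H, X) = (H - b X, X)) ∧
      (∀ p q : h × g,
        ψ (extBracketF (fun X => α X) (fun X Y => ρ X Y) p q)
          = extBracketF α' ρ' (ψ p) (ψ q)) ∧
      (∀ H : h, ψ (H, 0) = (H, 0)) ∧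
      (∀ p : h × g, (ψ p).2 = p.2)) :=
  statement6_general α (fun X Y => ρ X Y) h53 h54 b
end

section
/- Suppose α : g → Der(h) is 𝕜-linear and ρ : g × g → h is alternating bilinear with ad_{ρ(X,Y)} = ⁅α_X, α_Y⁆ − α_{⁅X,Y⁆} for all X, Y ∈ g. Define λ(X,Y,Z) = α_X(ρ(Y,Z)) + α_Y(ρ(Z,X)) + α_Z(ρ(X,Y)) − ρ(⁅X,Y⁆,Z) − ρ(⁅Y,Z⁆,X) − ρ(⁅Z,X⁆,Y). Then λ(X,Y,Z) lies in the center Z(h) for all X, Y, Z ∈ g. -/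
/-!
The element `λ X Y Z` is central iff `ad (λ X Y Z) = 0`. Since `ad (D H) = ⁅D, ad H⁆` for a
derivation `D`, and `ad (ρ X Y)` is the curvature of `α`, the vanishing of `ad (λ X Y Z)` is exactly
the Bianchi identity for `α`. That identity holds for additive maps between arbitrary Lie rings, by
the Jacobi identities of the source and of the target.
-/

/-- The curvature of a map `α` between Lie rings: the defect of `α` from preserving brackets. -/
def lieCurvature {g d : Type*} [LieRing g] [LieRing d] (α : g → d) (X Y : g) : d :=
  ⁅α X, α Y⁆ - α ⁅X, Y⁆

theorem lie_lie_cyclic_sum_eq_zero {g : Type*} [LieRing g] (X Y Z : g) :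
    ⁅⁅X, Y⁆, Z⁆ + ⁅⁅Y, Z⁆, X⁆ + ⁅⁅Z, X⁆, Y⁆ = 0 := by
  rw [← lie_skew ⁅X, Y⁆ Z, ← lie_skew ⁅Y, Z⁆ X, ← lie_skew ⁅Z, X⁆ Y]
  linear_combination (norm := abel) -lie_jacobi X Y Z

theorem lieCurvature_bianchi {g d : Type*} [LieRing g] [LieRing d] (α : g →+ d) (X Y Z : g) :
    ⁅α X, lieCurvature α Y Z⁆ + ⁅α Y, lieCurvature α Z X⁆ + ⁅α Z, lieCurvature α X Y⁆ =
      lieCurvature α ⁅X, Y⁆ Z + lieCurvature α ⁅Y, Z⁆ X + lieCurvature α ⁅Z, X⁆ Y := by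
  have jacobi_target := lie_jacobi (α X) (α Y) (α Z)
  have jacobi_source : α ⁅⁅X, Y⁆, Z⁆ + α ⁅⁅Y, Z⁆, X⁆ + α ⁅⁅Z, X⁆, Y⁆ = 0 := by
    rw [← map_add, ← map_add, lie_lie_cyclic_sum_eq_zero, map_zero]
  simp only [lieCurvature, lie_sub]
  rw [← lie_skew (α ⁅X, Y⁆) (α Z), ← lie_skew (α ⁅Y, Z⁆) (α X), ← lie_skew (α ⁅Z, X⁆) (α Y)]
  linear_combination (norm := abel) jacobi_target + jacobi_source

theorem statement10_general {R h g : Type*} [CommRing R] [LieRing h] [LieAlgebra R h] [LieRing g]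
    (α : g →+ LieDerivation R h h) (ρ : g → g → h)
    (ad_ρ : ∀ X Y : g, LieDerivation.ad R h (ρ X Y) = lieCurvature α X Y) (X Y Z : g) :
    α X (ρ Y Z) + α Y (ρ Z X) + α Z (ρ X Y) - ρ ⁅X, Y⁆ Z - ρ ⁅Y, Z⁆ X - ρ ⁅Z, X⁆ Y
      ∈ LieAlgebra.center R h := by
  rw [← LieDerivation.ad_ker_eq_center, LieHom.mem_ker]
  simp only [map_add, map_sub, ← LieDerivation.lie_der_ad_eq_ad_der, ad_ρ]
  rw [lieCurvature_bianchi]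
  abel

/-- Suppose `α : g → Der(h)` is `𝕜`-linear and `ρ : g × g → h` is
alternating bilinear with `ad_(ρ X Y) = ⁅α X, α Y⁆ - α ⁅X,Y⁆` for all `X, Y ∈ g`.
Define `λ X Y Z = α X (ρ Y Z) + α Y (ρ Z X) + α Z (ρ X Y)
- ρ ⁅X,Y⁆ Z - ρ ⁅Y,Z⁆ X - ρ ⁅Z,X⁆ Y`.  Then `λ X Y Z` lies in the center `Z(h)`
for all `X, Y, Z ∈ g`. -/
theorem statement10 {𝕜 : Type*} [Field 𝕜] {h g : Type*} [LieRing h] [LieAlgebra 𝕜 h]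
    [LieRing g] [LieAlgebra 𝕜 g] (α : g →ₗ[𝕜] LieDerivation 𝕜 h h)
    (ρ : g →ₗ[𝕜] g →ₗ[𝕜] h) (halt : ∀ X : g, ρ X X = 0)
    (h53 : ∀ X Y : g, LieDerivation.ad 𝕜 h (ρ X Y) = ⁅α X, α Y⁆ - α ⁅X, Y⁆) :
    ∀ X Y Z : g,
      α X (ρ Y Z) + α Y (ρ Z X) + α Z (ρ X Y)
          - ρ ⁅X, Y⁆ Z - ρ ⁅Y, Z⁆ X - ρ ⁅Z, X⁆ Y
        ∈ LieAlgebra.center 𝕜 h :=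
  statement10_general α.toAddMonoidHom (fun X Y ↦ ρ X Y) h53
end

section
/- Suppose (α, ρ) and (α, ρ') are two data with the same α, both satisfying conditions (5.3) and (5.4). Then μ := ρ − ρ' takes values in the center Z(h) and is a 2-cocycle: α_X(μ(Y,Z)) + α_Y(μ(Z,X)) + α_Z(μ(X,Y)) − μ(⁅X,Y⁆,Z) − μ(⁅Y,Z⁆,X) − μ(⁅Z,X⁆,Y) = 0 for all X, Y, Z ∈ g. -/
section CovariantDifferential

variable {g M F : Type*} [LieRing g] [AddCommGroup M] [FunLike F M M]

/-- The Chevalley–Eilenberg differential of a 2-cochain `ρ` on `g` with values in `M`, twisted by a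
family `α` of operators on `M`; its vanishing is condition (5.4). As `α` need not be a
representation, this differential need not square to zero. Cochains are arbitrary functions, with
no bilinearity or alternation built in. -/
def covariantDifferential (α : g → F) (ρ : g → g → M) (X Y Z : g) : M :=
  α X (ρ Y Z) + α Y (ρ Z X) + α Z (ρ X Y) - ρ ⁅X, Y⁆ Z - ρ ⁅Y, Z⁆ X - ρ ⁅Z, X⁆ Y

theorem covariantDifferential_sub [AddMonoidHomClass F M M] (α : g → F) (ρ ρ' : g → g → M) :
    covariantDifferential α (ρ - ρ') =
      covariantDifferential α ρ - covariantDifferential α ρ' := by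
  funext X Y Z
  simp only [covariantDifferential, Pi.sub_apply, map_sub]
  abel

end CovariantDifferential

section Center

variable {R h : Type*} [CommRing R] [LieRing h] [LieAlgebra R h]

theorem sub_mem_center_iff_ad_eq_ad {H K : h} :
    H - K ∈ LieAlgebra.center R h ↔ LieDerivation.ad R h H = LieDerivation.ad R h K := by
  rw [← LieDerivation.ad_ker_eq_center, LieHom.mem_ker, map_sub, sub_eq_zero]

theorem statement15_general {g : Type*} [LieRing g] (α : g → LieDerivation R h h)
    (ρ ρ' : g → g → h)
    (h53 : ∀ X Y : g, ⁅α X, α Y⁆ - α ⁅X, Y⁆ = LieDerivation.ad R h (ρ X Y))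
    (h53' : ∀ X Y : g, ⁅α X, α Y⁆ - α ⁅X, Y⁆ = LieDerivation.ad R h (ρ' X Y))
    (h54 : ∀ X Y Z : g, covariantDifferential α ρ X Y Z = 0)
    (h54' : ∀ X Y Z : g, covariantDifferential α ρ' X Y Z = 0) :
    (∀ X Y : g, (ρ - ρ') X Y ∈ LieAlgebra.center R h) ∧
      ∀ X Y Z : g, covariantDifferential α (ρ - ρ') X Y Z = 0 := by
  refine ⟨fun X Y => ?_, fun X Y Z => ?_⟩
  · exact sub_mem_center_iff_ad_eq_ad.mpr ((h53 X Y).symm.trans (h53' X Y))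
  · simp only [covariantDifferential_sub, Pi.sub_apply, h54, h54', sub_self]

end Center

/-- Suppose `(α, ρ)` and `(α, ρ')` are two data with the same `α`,
both satisfying conditions (5.3) and (5.4).  Then `μ := ρ - ρ'` takes values in the
center `Z(h)` and is a 2-cocycle:
`α X (μ Y Z) + α Y (μ Z X) + α Z (μ X Y)
- μ ⁅X,Y⁆ Z - μ ⁅Y,Z⁆ X - μ ⁅Z,X⁆ Y = 0` for all `X, Y, Z ∈ g`. -/
theorem statement15 {𝕜 : Type*} [Field 𝕜] {h g : Type*} [LieRing h] [LieAlgebra 𝕜 h]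
    [LieRing g] [LieAlgebra 𝕜 g] (α : g →ₗ[𝕜] LieDerivation 𝕜 h h)
    (ρ ρ' : g →ₗ[𝕜] g →ₗ[𝕜] h)
    (halt : ∀ X : g, ρ X X = 0) (halt' : ∀ X : g, ρ' X X = 0)
    (h53 : ∀ X Y : g, ⁅α X, α Y⁆ - α ⁅X, Y⁆ = LieDerivation.ad 𝕜 h (ρ X Y))
    (h53' : ∀ X Y : g, ⁅α X, α Y⁆ - α ⁅X, Y⁆ = LieDerivation.ad 𝕜 h (ρ' X Y))
    (h54 : ∀ X Y Z : g,
      α X (ρ Y Z) + α Y (ρ Z X) + α Z (ρ X Y)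
        - ρ ⁅X, Y⁆ Z - ρ ⁅Y, Z⁆ X - ρ ⁅Z, X⁆ Y = 0)
    (h54' : ∀ X Y Z : g,
      α X (ρ' Y Z) + α Y (ρ' Z X) + α Z (ρ' X Y)
        - ρ' ⁅X, Y⁆ Z - ρ' ⁅Y, Z⁆ X - ρ' ⁅Z, X⁆ Y = 0) :
    let μ : g → g → h := fun X Y => ρ X Y - ρ' X Y
    (∀ X Y : g, μ X Y ∈ LieAlgebra.center 𝕜 h) ∧
    (∀ X Y Z : g,
      α X (μ Y Z) + α Y (μ Z X) + α Z (μ X Y)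
        - μ ⁅X, Y⁆ Z - μ ⁅Y, Z⁆ X - μ ⁅Z, X⁆ Y = 0) :=
  statement15_general α (fun X Y => ρ X Y) (fun X Y => ρ' X Y) h53 h53' h54 h54'
end
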